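/- arXiv:1511.06872 — 2 statements merged into one kernel-verified Lean document; each statement's English description precedes it below -/
import Mathlib

section
/- Let G_xy be a parented a-graph belonging to A* and let c be a non-solution state of G_xy, say with c(x) = c(y) = 1. Then for each color k ∈ {2, 3, 4} there exists a path between x and y in G_xy all of whose vertices are colored 1 or k; that is, there exist 2-color paths between x and y for all three color-pairings that include the common color of x and y. -/
open SimpleGraph

/-- A proper vertex-coloring of `G` using at most 4 colors. -/
def IsProper4Coloring {V : Type} (G : SimpleGraph V) (c : V → Fin 4) : Prop :=
  ∀ a b : V, G.Adj a b → c a ≠ c b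

/-- The degree of a vertex, as the number of its neighbours. -/
noncomputable def vdeg {V : Type} (G : SimpleGraph V) (w : V) : ℕ :=
  (G.neighborSet w).ncard

/-- A (combinatorial) planar triangulation: a connected simple graph together with its
set of triangular faces, every edge lying on exactly two faces, satisfying Euler's
formula `v - e + f = 2`. -/
structure PlanarTriangulation (V : Type) [Fintype V] [DecidableEq V] where
  graph : SimpleGraph V
  connected : graph.Connected
  faces : Finset (Finset V)
  faces_card : ∀ f ∈ faces, f.card = 3
  faces_adj : ∀ f ∈ faces, ∀ a ∈ f, ∀ b ∈ f, a ≠ b → graph.Adj a b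
  edge_faces : ∀ a b : V, graph.Adj a b →
    (faces.filter fun f => a ∈ f ∧ b ∈ f).card = 2
  euler : (Fintype.card V : ℤ) - (graph.edgeSet.ncard : ℤ) + (faces.card : ℤ) = 2

/-- An a-graph: a near-triangulation of the plane whose unique non-triangular face is a
4-face with boundary cycle `u x v y`, the pairs `(x,y)` and `(u,v)` being the two pairs
of opposite (non-adjacent) boundary vertices.  All other faces are triangles, every
edge lies on exactly two faces (boundary edges lie on one triangle and the 4-face), and
Euler's formula holds. -/
structure AGraph (V : Type) [Fintype V] [DecidableEq V] where
  graph : SimpleGraph V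
  connected : graph.Connected
  u : V
  x : V
  v : V
  y : V
  adj_ux : graph.Adj u x
  adj_xv : graph.Adj x v
  adj_vy : graph.Adj v y
  adj_yu : graph.Adj y u
  not_adj_xy : ¬ graph.Adj x y
  not_adj_uv : ¬ graph.Adj u v
  x_ne_y : x ≠ y
  u_ne_v : u ≠ v
  faces : Finset (Finset V)
  faces_card : ∀ f ∈ faces, f.card = 3
  faces_adj : ∀ f ∈ faces, ∀ a ∈ f, ∀ b ∈ f, a ≠ b → graph.Adj a b
  edge_faces : ∀ a b : V, graph.Adj a b →
    (faces.filter fun f => a ∈ f ∧ b ∈ f).card =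
      (if ({a, b} : Finset V) ∈ ({{u, x}, {x, v}, {v, y}, {y, u}} : Finset (Finset V))
        then 1 else 2)
  euler : (Fintype.card V : ℤ) - (graph.edgeSet.ncard : ℤ) + ((faces.card : ℤ) + 1) = 2

/-- A parented a-graph `G_xy` is an a-graph counterexample if in every proper
4-coloring the designated opposite boundary vertices `x` and `y` get the same color. -/
def IsACounterexample {V : Type} [Fintype V] [DecidableEq V] (G : AGraph V) : Prop :=
  ∀ c : V → Fin 4, IsProper4Coloring G.graph c → c G.x = c G.y

/-- A minimal a-graph counterexample: an a-graph counterexample such that no a-graph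
counterexample has fewer vertices. -/
def IsMinimalACounterexample {V : Type} [Fintype V] [DecidableEq V] (G : AGraph V) : Prop :=
  IsACounterexample G ∧
    ∀ (W : Type) [Fintype W] [DecidableEq W] (H : AGraph W),
      IsACounterexample H → Fintype.card V ≤ Fintype.card W

/-- A minimal counterexample to the 4-color conjecture: a planar triangulation with no
proper 4-coloring such that every planar triangulation of lower order has one. -/
def IsMinimal4CTCounterexample {V : Type} [Fintype V] [DecidableEq V]
    (T : PlanarTriangulation V) : Prop :=
  (¬ ∃ c : V → Fin 4, IsProper4Coloring T.graph c) ∧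
    ∀ (W : Type) [Fintype W] [DecidableEq W] (S : PlanarTriangulation W),
      Fintype.card W < Fintype.card V → ∃ c : W → Fin 4, IsProper4Coloring S.graph c

/-- `b` can be reached from `a` by a walk of `G` all of whose vertices lie in `S`. -/
def ReachableWithin {V : Type} (G : SimpleGraph V) (S : Set V) (a b : V) : Prop :=
  ∃ p : G.Walk a b, ∀ w ∈ p.support, w ∈ S

/-- Removing the vertex set `S` from `G` leaves a disconnected graph. -/
def RemovalDisconnects {V : Type} (G : SimpleGraph V) (S : Set V) : Prop :=
  ∃ a b : V, a ∉ S ∧ b ∉ S ∧ ¬ ReachableWithin G Sᶜ a b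

/-- `G` has a separating cycle of length `n`. -/
def HasSeparatingCycle {V : Type} (G : SimpleGraph V) (n : ℕ) : Prop :=
  ∃ (a : V) (p : G.Walk a a), p.IsCycle ∧ p.length = n ∧
    RemovalDisconnects G {w | w ∈ p.support}

/-- A planar triangulation is internally 6-connected if it has minimum degree 5, no
separating 3-cycles or 4-cycles, and whenever a separating 5-cycle is removed, at least
one of the resulting components consists of a single vertex. -/
def Internally6Connected {V : Type} [Fintype V] [DecidableEq V]
    (T : PlanarTriangulation V) : Prop :=
  (∀ w : V, 5 ≤ vdeg T.graph w) ∧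
  ¬ HasSeparatingCycle T.graph 3 ∧
  ¬ HasSeparatingCycle T.graph 4 ∧
  ∀ (a : V) (p : T.graph.Walk a a), p.IsCycle → p.length = 5 →
    RemovalDisconnects T.graph {w | w ∈ p.support} →
    ∃ z : V, z ∉ p.support ∧
      ∀ b : V, b ∉ p.support → ReachableWithin T.graph {w | w ∉ p.support} z b → b = z

/-- The graph of the parent triangulation `G + xy` of an a-graph `G`. -/
def parentXYGraph {V : Type} [Fintype V] [DecidableEq V] (G : AGraph V) : SimpleGraph V :=
  G.graph ⊔ SimpleGraph.fromEdgeSet {s(G.x, G.y)}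

/-- The graph of the parent triangulation `G + uv` of an a-graph `G`. -/
def parentUVGraph {V : Type} [Fintype V] [DecidableEq V] (G : AGraph V) : SimpleGraph V :=
  G.graph ⊔ SimpleGraph.fromEdgeSet {s(G.u, G.v)}

/-- An a-graph is internally 6a-connected if at least one of its two parent
triangulations is internally 6-connected. -/
def Internally6aConnected {V : Type} [Fintype V] [DecidableEq V] (G : AGraph V) : Prop :=
  ∃ T : PlanarTriangulation V,
    (T.graph = parentXYGraph G ∨ T.graph = parentUVGraph G) ∧ Internally6Connected T

/-- A single Kempe exchange: for some pair of distinct colors `j`, `k`, the colors `j`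
and `k` are swapped on a non-empty proper subset of the `j`-`k` Kempe chains (a
non-empty union `U` of connected components of the subgraph induced by the vertices
colored `j` or `k`, with `U` not all of them), all other vertices keeping their color. -/
def KempeStep {V : Type} (G : SimpleGraph V) (c c' : V → Fin 4) : Prop :=
  ∃ j k : Fin 4, j ≠ k ∧ ∃ U : Set V,
    U.Nonempty ∧
    U ⊆ {w | c w = j ∨ c w = k} ∧
    U ≠ {w | c w = j ∨ c w = k} ∧
    (∀ a ∈ U, ∀ b : V, ReachableWithin G {w | c w = j ∨ c w = k} a b → b ∈ U) ∧
    (∀ w ∈ U, c' w = if c w = j then k else j) ∧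
    (∀ w : V, w ∉ U → c' w = c w)

/-- The equivalence relation on colorings generated by Kempe exchanges. -/
def KempeEquiv {V : Type} (G : SimpleGraph V) : (V → Fin 4) → (V → Fin 4) → Prop :=
  Relation.EqvGen (KempeStep G)

/-- For designated vertices `x`, `y`: no Kempe equivalence class of proper 4-colorings
contains both a non-solution state (`c x = c y`) and a solution state (`c x ≠ c y`).
This is the defining property of the family `A*`. -/
def NoNSClass {V : Type} (G : SimpleGraph V) (x y : V) : Prop :=
  ∀ c c' : V → Fin 4, IsProper4Coloring G c → IsProper4Coloring G c' →
    KempeEquiv G c c' → (c x = c y ↔ c' x = c' y)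

/-- The coloring state determined by a coloring: the induced partition of the vertex
set into color classes, recorded as the relation of having equal colors.  Two colorings
represent the same state precisely when they have the same `statePart`. -/
def statePart {V : Type} (c : V → Fin 4) : V → V → Prop :=
  fun a b => c a = c b

/-- The four boundary vertices of an a-graph. -/
def boundaryFinset {V : Type} [Fintype V] [DecidableEq V] (G : AGraph V) : Finset V :=
  {G.u, G.x, G.v, G.y}

/-- The interior vertices of an a-graph: those not on the boundary 4-cycle. -/
def interiorFinset {V : Type} [Fintype V] [DecidableEq V] (G : AGraph V) : Finset V :=
  Finset.univ \ boundaryFinset G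

open Classical in
/-- The inner ring of an a-graph: the interior vertices adjacent to some boundary
vertex. -/
noncomputable def innerRingFinset {V : Type} [Fintype V] [DecidableEq V]
    (G : AGraph V) : Finset V :=
  (interiorFinset G).filter fun w => ∃ b ∈ boundaryFinset G, G.graph.Adj w b

/-- `G` belongs to the family `G(m,n)`: its inner ring has order `n` and encloses `m`
further interior vertices. -/
def InFamilyG {V : Type} [Fintype V] [DecidableEq V] (G : AGraph V) (m n : ℕ) : Prop :=
  (innerRingFinset G).card = n ∧ (interiorFinset G \ innerRingFinset G).card = m

/-- The icosahedron, the unique 5-regular planar triangulation, on 12 vertices. -/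
def icosG : SimpleGraph (Fin 12) :=
  SimpleGraph.fromEdgeSet
    {s(0, 1), s(0, 2), s(0, 3), s(0, 4), s(0, 5),
     s(1, 2), s(2, 3), s(3, 4), s(4, 5), s(5, 1),
     s(11, 6), s(11, 7), s(11, 8), s(11, 9), s(11, 10),
     s(6, 7), s(7, 8), s(8, 9), s(9, 10), s(10, 6),
     s(1, 6), s(1, 10), s(2, 6), s(2, 7), s(3, 7),
     s(3, 8), s(4, 8), s(4, 9), s(5, 9), s(5, 10)}

/-- The order-12 a-graph `G*`: the icosahedron with the edge `uv = {0,1}` deleted.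
Its boundary 4-cycle is `u x v y = 0 2 1 5`, so `(x, y) = (2, 5)` and
`(u, v) = (0, 1)` are the two pairs of opposite boundary vertices. -/
def gstarG : SimpleGraph (Fin 12) := icosG.deleteEdges {s(0, 1)}

/-- The boundary vertex `u` of `G*`. -/
def gstarU : Fin 12 := 0
/-- The boundary vertex `v` of `G*`. -/
def gstarV : Fin 12 := 1
/-- The boundary vertex `x` of `G*`. -/
def gstarX : Fin 12 := 2
/-- The boundary vertex `y` of `G*`. -/
def gstarY : Fin 12 := 5

/-!
Let `j` be the common color of `x` and `y`. If no `j`-`k` path joined `x` and `y`, then `y` would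
lie outside the `j`-`k` Kempe chain of `x`, and exchanging `j` and `k` on that chain alone would
recolor `x` but not `y`. This turns a non-solution state into a solution state
of the same Kempe class.
-/

namespace ReachableWithin

variable {V : Type} {G : SimpleGraph V} {S : Set V} {a b d : V}

theorem refl (ha : a ∈ S) : ReachableWithin G S a a :=
  ⟨Walk.nil, by simpa using ha⟩

theorem right_mem : ReachableWithin G S a b → b ∈ S :=
  fun ⟨p, hp⟩ => hp b p.end_mem_support

theorem trans : ReachableWithin G S a b → ReachableWithin G S b d → ReachableWithin G S a d :=
  fun ⟨p, hp⟩ ⟨q, hq⟩ => ⟨p.append q, fun w hw =>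
    ((Walk.mem_support_append_iff p q).1 hw).elim (hp w) (hq w)⟩

theorem of_adj (hab : G.Adj a b) (ha : a ∈ S) (hb : b ∈ S) : ReachableWithin G S a b :=
  ⟨hab.toWalk, by simpa using ⟨ha, hb⟩⟩

end ReachableWithin

section KempeExchange

variable {V : Type} {G : SimpleGraph V} {c c' : V → Fin 4} {j k : Fin 4} {a b x y : V}

theorem IsProper4Coloring.of_kempeStep (hc : IsProper4Coloring G c) (hstep : KempeStep G c c') :
    IsProper4Coloring G c' := by
  obtain ⟨j, k, -, U, -, hU, -, hclosed, hswap, hkeep⟩ := hstep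
  have ne_of_mem_of_notMem {a b : V} (hab : G.Adj a b) (ha : a ∈ U) (hb : b ∉ U) :
      c' a ≠ c' b := by
    have hcb : ¬(c b = j ∨ c b = k) := fun h => hb (hclosed a ha b (.of_adj hab (hU ha) h))
    have hca : c' a = j ∨ c' a = k := by grind
    rw [hkeep b hb]
    exact fun h => hcb (h ▸ hca)
  intro a b hab
  by_cases ha : a ∈ U <;> by_cases hb : b ∈ U
  · have hne : c a ≠ c b := hc a b hab
    have hca : c a = j ∨ c a = k := hU ha
    have hcb : c b = j ∨ c b = k := hU hb
    rw [hswap a ha, hswap b hb]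
    grind
  · exact ne_of_mem_of_notMem hab ha hb
  · exact (ne_of_mem_of_notMem hab.symm hb ha).symm
  · rw [hkeep a ha, hkeep b hb]
    exact hc a b hab

theorem NoNSClass.eq_iff_of_kempeStep (hA : NoNSClass G x y) (hc : IsProper4Coloring G c)
    (hstep : KempeStep G c c') : c x = c y ↔ c' x = c' y :=
  hA c c' hc (hc.of_kempeStep hstep) (.rel _ _ hstep)

/-- The `j`-`k` Kempe chain of the vertex `a` under the coloring `c`, as a set of vertices. It is
empty when `a` has neither of the two colors. -/
def kempeChain (G : SimpleGraph V) (c : V → Fin 4) (j k : Fin 4) (a : V) : Set V :=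
  {w | ReachableWithin G {w | c w = j ∨ c w = k} a w}

open Classical in
/-- The coloring obtained from `c` by exchanging the colors `j` and `k` on the vertex set `U`. -/
noncomputable def kempeSwap (c : V → Fin 4) (j k : Fin 4) (U : Set V) : V → Fin 4 :=
  U.piecewise (Equiv.swap j k ∘ c) c

theorem kempeSwap_of_mem {U : Set V} (ha : a ∈ U) :
    kempeSwap c j k U a = Equiv.swap j k (c a) :=
  if_pos ha

theorem kempeSwap_of_notMem {U : Set V} (ha : a ∉ U) : kempeSwap c j k U a = c a :=
  if_neg ha

theorem kempeStep_kempeSwap_kempeChain (hjk : j ≠ k) (ha : c a = j ∨ c a = k)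
    (hb : c b = j ∨ c b = k) (hab : b ∉ kempeChain G c j k a) :
    KempeStep G c (kempeSwap c j k (kempeChain G c j k a)) := by
  refine ⟨j, k, hjk, kempeChain G c j k a, ⟨a, .refl ha⟩, fun _ hw => hw.right_mem,
    fun h => hab (h ▸ hb), fun _ hw _ => hw.trans, fun w hw => ?_,
    fun _ => kempeSwap_of_notMem⟩
  have hcw : c w = j ∨ c w = k := hw.right_mem
  rw [kempeSwap_of_mem hw, Equiv.swap_apply_def]
  grind

theorem stmt_4_general (hA : NoNSClass G x y) (hc : IsProper4Coloring G c) (hns : c x = c y)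
    (hk : k ≠ c x) : ∃ p : G.Walk x y, ∀ w ∈ p.support, c w = c x ∨ c w = k := by
  by_contra hy
  replace hy : y ∉ kempeChain G c (c x) k x := hy
  have hx : x ∈ kempeChain G c (c x) k x := .refl (.inl rfl)
  have hstep := kempeStep_kempeSwap_kempeChain hk.symm (.inl rfl) (.inl hns.symm) hy
  have hswap := (hA.eq_iff_of_kempeStep hc hstep).1 hns
  rw [kempeSwap_of_mem hx, Equiv.swap_apply_left, kempeSwap_of_notMem hy] at hswap
  exact hk (hswap.trans hns.symm)

end KempeExchange

/-- For `G_xy ∈ A*` and a non-solution state `c` (with `c x = c y`), for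
each color `k` different from the common color of `x` and `y` there is a path between
`x` and `y` all of whose vertices are colored with the common color or `k`. -/
theorem stmt_4 {V : Type} [Fintype V] [DecidableEq V] (G : AGraph V)
    (hA : NoNSClass G.graph G.x G.y) (c : V → Fin 4)
    (hc : IsProper4Coloring G.graph c) (hns : c G.x = c G.y) :
    ∀ k : Fin 4, k ≠ c G.x →
      ∃ p : G.graph.Walk G.x G.y, ∀ w ∈ p.support, c w = c G.x ∨ c w = k :=
  fun _ => stmt_4_general hA hc hns
end

section
/- If G is an a-graph belonging to G(0,n) or to G(1,n) (i.e., its inner ring encloses at most one interior vertex), then G is not internally 6a-connected: neither of its two parent triangulations is internally 6-connected. -/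
open SimpleGraph

/-!
Euler's formula gives `|E| = 3|V| - 7`. Writing `b w` for the number of boundary neighbours of `w`
and summing degrees, `∑ (deg w + b w) = 6|I| + 2` over the set `I` of interior vertices. Vertices
off the inner ring `R` have degree at least `5`, so if there are `m` of them,
`∑ (deg w + b w) ≤ 6|R| + 2 + m` over `R`.

Conversely, this sum over `R` is at least `6|R| + 4`. Each of the four boundary edges lies on a
triangle whose apex is in `R`, and a ring vertex that is the apex of `k < 4` of them has at least
`k + 1` boundary neighbours, which gives an excess of `4` over `6|R|`. If a single vertex `r` sees
all four boundary vertices, it contributes `3`, and one more if its degree is not `5`. If its degree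
is `5`, its unique interior neighbour `q` shares two boundary neighbours with `r`, and contributes
one more. Hence `m ≥ 2`.
-/

open scoped Finset

theorem card_nsmul_add_sum_le_sum_add_card_nsmul {ι M : Type*} [DecidableEq ι] [AddCommMonoid M]
    [PartialOrder M] [IsOrderedAddMonoid M] {s t : Finset ι} {f : ι → M} {c : M}
    (hts : t ⊆ s) (hf : ∀ i ∈ s \ t, c ≤ f i) :
    #s • c + ∑ i ∈ t, f i ≤ ∑ i ∈ s, f i + #t • c := by
  have hdiff : #(s \ t) • c ≤ ∑ i ∈ s \ t, f i := Finset.card_nsmul_le_sum _ _ _ hf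
  calc #s • c + ∑ i ∈ t, f i
      = #(s \ t) • c + (∑ i ∈ t, f i + #t • c) := by
        rw [← Finset.card_sdiff_add_card_eq_card hts, add_nsmul]; abel
    _ ≤ ∑ i ∈ s \ t, f i + (∑ i ∈ t, f i + #t • c) := by gcongr
    _ = ∑ i ∈ s, f i + #t • c := by rw [← add_assoc, Finset.sum_sdiff hts]

theorem card_lt_card_union_image_add_one_of_ne_univ {C : Finset (Fin 4)} (hne : C.Nonempty)
    (huniv : C ≠ Finset.univ) : #C < #(C ∪ C.image (· + 1)) := by
  revert C
  decide

section Graph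

variable {V : Type*} {G : SimpleGraph V}

theorem sum_card_filter_adj_eq_sum_degree [Fintype V] [DecidableRel G.Adj] (S : Finset V) :
    ∑ w, #{b ∈ S | G.Adj w b} = ∑ b ∈ S, G.degree b := by
  refine (Finset.sum_card_bipartiteAbove_eq_sum_card_bipartiteBelow G.Adj).trans ?_
  refine Finset.sum_congr rfl fun b _ => ?_
  simp only [Finset.bipartiteBelow, G.adj_comm _ b, ← card_neighborFinset_eq_degree,
    neighborFinset_eq_filter]

variable [DecidableEq V]

theorem card_filter_edgeFinset_mem_sym2 [Fintype G.edgeSet] {s : Finset V} (hs : G.IsClique s) :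
    #{e ∈ G.edgeFinset | e ∈ s.sym2} = (#s).choose 2 := by
  have hnotDiag : {e ∈ G.edgeFinset | e ∈ s.sym2} = {e ∈ s.sym2 | ¬ e.IsDiag} := by
    ext e
    induction e with | _ a b
    simp only [Finset.mem_filter, mem_edgeFinset, mem_edgeSet, Finset.mk_mem_sym2_iff,
      Sym2.mk_isDiag_iff]
    exact ⟨fun h => ⟨h.2, h.1.ne⟩, fun h => ⟨hs h.1.1 h.1.2 h.2, h.1⟩⟩
  rw [hnotDiag, Finset.sym2_eq_image, Sym2.filter_image_mk_not_isDiag, Sym2.card_image_offDiag]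

theorem sum_card_filter_mem_sym2_eq_three_mul_card [Fintype G.edgeSet] {F : Finset (Finset V)}
    (hF : ∀ f ∈ F, G.IsNClique 3 f) :
    ∑ e ∈ G.edgeFinset, #{f ∈ F | e ∈ f.sym2} = 3 * #F := by
  have htriangle : ∀ f ∈ F, #{e ∈ G.edgeFinset | e ∈ f.sym2} = 3 := fun f hf => by
    rw [card_filter_edgeFinset_mem_sym2 (hF f hf).isClique, (hF f hf).card_eq]
    rfl
  calc ∑ e ∈ G.edgeFinset, #{f ∈ F | e ∈ f.sym2}
      = ∑ f ∈ F, #{e ∈ G.edgeFinset | e ∈ f.sym2} :=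
        Finset.sum_card_bipartiteAbove_eq_sum_card_bipartiteBelow _
    _ = 3 * #F := by rw [Finset.sum_congr rfl htriangle, Finset.sum_const, smul_eq_mul, mul_comm]

variable [Fintype V] [DecidableRel G.Adj]

theorem card_filter_mem_sym2_le_card_neighborFinset_inter {F : Finset (Finset V)}
    (hF : ∀ f ∈ F, G.IsNClique 3 f) {a b : V} (hab : a ≠ b) :
    #{f ∈ F | s(a, b) ∈ f.sym2} ≤ #(G.neighborFinset a ∩ G.neighborFinset b) := by
  refine (Finset.card_le_card fun f hf => ?_).trans
    (Finset.card_image_le (f := fun t => ({t, a, b} : Finset V)))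
  obtain ⟨hfF, ha, hb⟩ : f ∈ F ∧ a ∈ f ∧ b ∈ f := by
    simpa only [Finset.mem_filter, Finset.mk_mem_sym2_iff] using hf
  obtain ⟨hclique, hcard⟩ := hF f hfF
  have hpair : {a, b} ⊆ f := Finset.insert_subset ha (Finset.singleton_subset_iff.mpr hb)
  obtain ⟨t, ht, rfl⟩ := (Finset.covBy_iff_card_sdiff_eq_one.mpr ⟨hpair, by
    rw [Finset.card_sdiff_of_subset hpair, Finset.card_pair hab, hcard]⟩).exists_finset_insert
  rw [Finset.mem_insert, Finset.mem_singleton, not_or] at ht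
  have htf : t ∈ ({t, a, b} : Finset V) := Finset.mem_insert_self _ _
  simp only [Finset.mem_image, Finset.mem_inter, mem_neighborFinset]
  exact ⟨t, ⟨hclique ha htf (Ne.symm ht.1), hclique hb htf (Ne.symm ht.2)⟩, rfl⟩

theorem sum_compl_degree_add_card_filter_adj (S : Finset V) :
    ∑ w ∈ Sᶜ, (G.degree w + #{b ∈ S | G.Adj w b}) + ∑ w ∈ S, #{b ∈ S | G.Adj w b} =
      2 * #G.edgeFinset := by
  have hdegree := Finset.sum_compl_add_sum S fun w => G.degree w
  have hinto := Finset.sum_compl_add_sum S fun w => #{b ∈ S | G.Adj w b}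
  rw [sum_card_filter_adj_eq_sum_degree] at hinto
  rw [Finset.sum_add_distrib, ← G.sum_degrees_eq_twice_card_edges]
  omega

end Graph

theorem mk_eq_mk_iff_pair_eq_pair {α : Type*} [DecidableEq α] {a b c d : α} :
    s(a, b) = s(c, d) ↔ ({a, b} : Finset α) = {c, d} := by
  rw [Sym2.eq_iff, ← Set.pair_eq_pair_iff, ← Finset.coe_inj, Finset.coe_pair, Finset.coe_pair]

theorem vdeg_eq_degree {V : Type} (G : SimpleGraph V) (w : V) [Fintype (G.neighborSet w)] :
    vdeg G w = G.degree w := by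
  rw [vdeg, Set.ncard_eq_toFinset_card', ← card_neighborFinset_eq_degree, neighborFinset]

theorem vdeg_sup_fromEdgeSet_singleton {V : Type} (G : SimpleGraph V) {a b w : V} (ha : w ≠ a)
    (hb : w ≠ b) : vdeg (G ⊔ fromEdgeSet {s(a, b)}) w = vdeg G w := by
  have hneighborSet : (G ⊔ fromEdgeSet {s(a, b)}).neighborSet w = G.neighborSet w := by
    ext z
    simp [ha, hb]
  rw [vdeg, hneighborSet, vdeg]

namespace AGraph

variable {V : Type} [Fintype V] [DecidableEq V] (G : AGraph V)

/-- The boundary 4-cycle of an a-graph as a cyclic sequence `u, x, v, y` indexed by `Fin 4`, so that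
consecutive boundary vertices have indices `i` and `i + 1` (addition modulo 4). -/
def boundaryVertex : Fin 4 → V :=
  ![G.u, G.x, G.v, G.y]

/-- The boundary edge joining the `i`-th boundary vertex to the next one. -/
def boundaryEdge (i : Fin 4) : Sym2 V :=
  s(G.boundaryVertex i, G.boundaryVertex (i + 1))

/-- The set of the four edges of the boundary 4-cycle. -/
def boundaryEdges : Finset (Sym2 V) :=
  Finset.univ.image G.boundaryEdge

/-- The number of neighbours of `w` on the boundary 4-cycle. -/
def boundaryDegree [DecidableRel G.graph.Adj] (w : V) : ℕ :=
  #{b ∈ boundaryFinset G | G.graph.Adj w b}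

theorem boundaryVertex_injective : Function.Injective G.boundaryVertex := by
  have hux := G.adj_ux.ne
  have hxv := G.adj_xv.ne
  have hvy := G.adj_vy.ne
  have hyu := G.adj_yu.ne
  have hxy := G.x_ne_y
  have huv := G.u_ne_v
  intro i j
  fin_cases i <;> fin_cases j <;> simp [boundaryVertex] <;> grind

theorem map_boundaryVertex_univ :
    Finset.univ.map ⟨G.boundaryVertex, G.boundaryVertex_injective⟩ = boundaryFinset G := by
  ext w
  simp [boundaryVertex, boundaryFinset, Fin.exists_fin_succ, eq_comm]

theorem boundaryVertex_mem_boundaryFinset (i : Fin 4) : G.boundaryVertex i ∈ boundaryFinset G := by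
  simp [← G.map_boundaryVertex_univ]

theorem card_boundaryFinset : #(boundaryFinset G) = 4 := by
  rw [← G.map_boundaryVertex_univ, Finset.card_map, Finset.card_fin]

theorem adj_boundaryVertex_iff (i j : Fin 4) :
    G.graph.Adj (G.boundaryVertex i) (G.boundaryVertex j) ↔ (cycleGraph 4).Adj i j := by
  have hxy := G.not_adj_xy
  have huv := G.not_adj_uv
  fin_cases i <;> fin_cases j <;> first
    | exact iff_of_true (by simp [boundaryVertex, G.adj_ux, G.adj_ux.symm, G.adj_xv, G.adj_xv.symm,
        G.adj_vy, G.adj_vy.symm, G.adj_yu, G.adj_yu.symm]) (by decide)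
    | exact iff_of_false (by simp [boundaryVertex, hxy, huv, mt Adj.symm hxy, mt Adj.symm huv])
        (by decide)

theorem boundaryEdge_injective : Function.Injective G.boundaryEdge := by
  have hcycle : Function.Injective fun i : Fin 4 => s(i, i + 1) := by decide
  exact (Sym2.map.injective G.boundaryVertex_injective).comp hcycle

theorem boundaryEdge_mem_edgeSet (i : Fin 4) : G.boundaryEdge i ∈ G.graph.edgeSet :=
  (G.adj_boundaryVertex_iff i (i + 1)).mpr (by revert i; decide)

theorem card_boundaryEdges : #G.boundaryEdges = 4 := by
  rw [boundaryEdges, Finset.card_image_of_injective _ G.boundaryEdge_injective, Finset.card_fin]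

theorem mk_mem_boundaryEdges_iff (a b : V) :
    s(a, b) ∈ G.boundaryEdges ↔
      ({a, b} : Finset V) ∈ ({{G.u, G.x}, {G.x, G.v}, {G.v, G.y}, {G.y, G.u}} :
        Finset (Finset V)) := by
  simp only [Finset.mem_insert, Finset.mem_singleton, ← mk_eq_mk_iff_pair_eq_pair]
  simp [boundaryEdges, boundaryEdge, boundaryVertex, Fin.exists_fin_succ, eq_comm (a := s(a, b))]

theorem mem_boundaryFinset_of_mem_boundaryEdges {e : Sym2 V} {w : V} (he : e ∈ G.boundaryEdges)
    (hw : w ∈ e) : w ∈ boundaryFinset G := by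
  obtain ⟨i, -, rfl⟩ := Finset.mem_image.mp he
  obtain rfl | rfl := Sym2.mem_iff.mp hw <;> exact G.boundaryVertex_mem_boundaryFinset _

theorem isNClique_of_mem_faces {f : Finset V} (hf : f ∈ G.faces) : G.graph.IsNClique 3 f :=
  ⟨fun a ha b hb => G.faces_adj f hf a ha b hb, G.faces_card f hf⟩

variable {G} in
theorem mem_innerRingFinset_iff_exists_adj {w : V} :
    w ∈ innerRingFinset G ↔
      w ∈ interiorFinset G ∧ ∃ b ∈ boundaryFinset G, G.graph.Adj w b := by
  classical
  exact Finset.mem_filter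

variable {G} in
theorem innerRingFinset_subset_interiorFinset : innerRingFinset G ⊆ interiorFinset G :=
  fun _ hw => (mem_innerRingFinset_iff_exists_adj.mp hw).1

theorem card_filter_faces_mem_sym2 {e : Sym2 V} (he : e ∈ G.graph.edgeSet) :
    #{f ∈ G.faces | e ∈ f.sym2} = if e ∈ G.boundaryEdges then 1 else 2 := by
  induction e with | _ a b
  simpa only [Finset.mk_mem_sym2_iff, mk_mem_boundaryEdges_iff] using G.edge_faces a b he

variable {G} in
theorem exists_adj_adj_of_adj {a b : V} (hab : G.graph.Adj a b) :
    ∃ t, G.graph.Adj a t ∧ G.graph.Adj b t := by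
  classical
  have hfaces := G.card_filter_faces_mem_sym2 (G.graph.mem_edgeSet.mpr hab)
  have hle := card_filter_mem_sym2_le_card_neighborFinset_inter
    (fun f => G.isNClique_of_mem_faces (f := f)) hab.ne
  have hcommon : (G.graph.neighborFinset a ∩ G.graph.neighborFinset b).Nonempty := by
    rw [← Finset.card_pos]
    split_ifs at hfaces <;> omega
  simpa only [Finset.Nonempty, Finset.mem_inter, mem_neighborFinset] using hcommon

theorem exists_mem_innerRing_adj_boundaryVertex (i : Fin 4) :
    ∃ t ∈ innerRingFinset G, G.graph.Adj t (G.boundaryVertex i) ∧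
      G.graph.Adj t (G.boundaryVertex (i + 1)) := by
  obtain ⟨t, hadj, hadj_succ⟩ := exists_adj_adj_of_adj
    ((G.adj_boundaryVertex_iff i (i + 1)).mpr (by revert i; decide))
  have hinterior : t ∈ interiorFinset G := by
    refine Finset.mem_sdiff.mpr ⟨Finset.mem_univ t, fun ht => ?_⟩
    rw [← G.map_boundaryVertex_univ] at ht
    obtain ⟨j, -, rfl⟩ := Finset.mem_map.mp ht
    have htriangle : ∀ i j : Fin 4, (cycleGraph 4).Adj i j → ¬ (cycleGraph 4).Adj (i + 1) j := by
      decide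
    exact htriangle i j ((G.adj_boundaryVertex_iff i j).mp hadj)
      ((G.adj_boundaryVertex_iff (i + 1) j).mp hadj_succ)
  exact ⟨t, mem_innerRingFinset_iff_exists_adj.mpr
    ⟨hinterior, _, G.boundaryVertex_mem_boundaryFinset i, hadj.symm⟩, hadj.symm, hadj_succ.symm⟩

variable [DecidableRel G.graph.Adj]

theorem three_mul_card_faces_add_four : 3 * #G.faces + 4 = 2 * #G.graph.edgeFinset := by
  have hboundary : {e ∈ G.graph.edgeFinset | e ∈ G.boundaryEdges} = G.boundaryEdges := by
    refine Finset.filter_mem_eq_inter.trans (Finset.inter_eq_right.mpr fun e he => ?_)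
    obtain ⟨i, -, rfl⟩ := Finset.mem_image.mp he
    exact mem_edgeFinset.mpr (G.boundaryEdge_mem_edgeSet i)
  have hincidences : ∀ e ∈ G.graph.edgeFinset,
      #{f ∈ G.faces | e ∈ f.sym2} + (if e ∈ G.boundaryEdges then 1 else 0) = 2 := fun e he => by
    rw [G.card_filter_faces_mem_sym2 (mem_edgeFinset.mp he)]
    split_ifs <;> rfl
  calc 3 * #G.faces + 4
      = ∑ e ∈ G.graph.edgeFinset,
          (#{f ∈ G.faces | e ∈ f.sym2} + if e ∈ G.boundaryEdges then 1 else 0) := by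
        rw [Finset.sum_add_distrib, ← Finset.card_filter, hboundary, card_boundaryEdges,
          sum_card_filter_mem_sym2_eq_three_mul_card fun f => G.isNClique_of_mem_faces]
    _ = 2 * #G.graph.edgeFinset := by
        rw [Finset.sum_congr rfl hincidences, Finset.sum_const, smul_eq_mul, mul_comm]

theorem card_edgeFinset_add_seven : #G.graph.edgeFinset + 7 = 3 * Fintype.card V := by
  have hincidences := G.three_mul_card_faces_add_four
  have heuler := G.euler
  rw [← coe_edgeFinset, Set.ncard_coe_finset] at heuler
  omega

theorem boundaryDegree_eq_card_filter_fin (w : V) :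
    G.boundaryDegree w = #{i | G.graph.Adj w (G.boundaryVertex i)} := by
  rw [boundaryDegree, ← G.map_boundaryVertex_univ, Finset.filter_map, Finset.card_map]
  rfl

theorem boundaryDegree_boundaryVertex (i : Fin 4) : G.boundaryDegree (G.boundaryVertex i) = 2 := by
  simp only [boundaryDegree_eq_card_filter_fin, adj_boundaryVertex_iff]
  revert i
  decide

theorem sum_interior_degree_add_boundaryDegree :
    ∑ w ∈ interiorFinset G, (G.graph.degree w + G.boundaryDegree w) =
      6 * #(interiorFinset G) + 2 := by
  have hdegreeSum :
      ∑ w ∈ interiorFinset G, (G.graph.degree w + G.boundaryDegree w) +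
        ∑ w ∈ boundaryFinset G, G.boundaryDegree w = 2 * #G.graph.edgeFinset :=
    sum_compl_degree_add_card_filter_adj (boundaryFinset G)
  have hboundary : ∑ w ∈ boundaryFinset G, G.boundaryDegree w = 8 := by
    simp [← G.map_boundaryVertex_univ, boundaryDegree_boundaryVertex]
  have hcard : #(interiorFinset G) + #(boundaryFinset G) = Fintype.card V :=
    Finset.card_compl_add_card (boundaryFinset G)
  have hedges := G.card_edgeFinset_add_seven
  rw [card_boundaryFinset] at hcard
  omega

variable {G}

theorem mem_innerRingFinset_iff {w : V} :
    w ∈ innerRingFinset G ↔ w ∈ interiorFinset G ∧ 0 < G.boundaryDegree w := by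
  rw [mem_innerRingFinset_iff_exists_adj, boundaryDegree, Finset.card_pos,
    Finset.filter_nonempty_iff]

theorem sum_innerRing_degree_add_boundaryDegree_le
    (hdeg : ∀ w ∈ interiorFinset G, 5 ≤ G.graph.degree w) :
    ∑ w ∈ innerRingFinset G, (G.graph.degree w + G.boundaryDegree w) ≤
      6 * #(innerRingFinset G) + 2 + #(interiorFinset G \ innerRingFinset G) := by
  have hsubset := innerRingFinset_subset_interiorFinset (G := G)
  have hexcess := card_nsmul_add_sum_le_sum_add_card_nsmul
    (f := fun w => G.graph.degree w + G.boundaryDegree w) (c := 5) hsubset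
    fun w hw => le_add_right (hdeg w (Finset.mem_sdiff.mp hw).1)
  have hcard := Finset.card_sdiff_add_card_eq_card hsubset
  rw [sum_interior_degree_add_boundaryDegree, smul_eq_mul, smul_eq_mul] at hexcess
  omega

theorem two_le_card_neighborFinset_inter {a b : V} (hab : G.graph.Adj a b)
    (ha : a ∈ interiorFinset G) :
    2 ≤ #(G.graph.neighborFinset a ∩ G.graph.neighborFinset b) := by
  have hnotBoundary : s(a, b) ∉ G.boundaryEdges := fun h =>
    (Finset.mem_sdiff.mp ha).2 (G.mem_boundaryFinset_of_mem_boundaryEdges h (Sym2.mem_mk_left a b))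
  have hfaces := G.card_filter_faces_mem_sym2 (G.graph.mem_edgeSet.mpr hab)
  rw [if_neg hnotBoundary] at hfaces
  exact hfaces.ge.trans (card_filter_mem_sym2_le_card_neighborFinset_inter
    (fun f => G.isNClique_of_mem_faces) hab.ne)

theorem card_lt_boundaryDegree_of_adj_succ {w : V} (hw : w ∈ innerRingFinset G)
    (hne : G.boundaryDegree w ≠ 4) {C : Finset (Fin 4)}
    (hadj : ∀ i ∈ C, G.graph.Adj w (G.boundaryVertex i))
    (hadj_succ : ∀ i ∈ C, G.graph.Adj w (G.boundaryVertex (i + 1))) :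
    #C < G.boundaryDegree w := by
  obtain rfl | hnonempty := C.eq_empty_or_nonempty
  · exact (mem_innerRingFinset_iff.mp hw).2
  rw [boundaryDegree_eq_card_filter_fin] at hne ⊢
  have hproper : C ≠ Finset.univ := by
    rintro rfl
    exact hne (by rw [Finset.filter_true_of_mem hadj, Finset.card_fin])
  have hsubset : C ∪ C.image (· + 1) ⊆
      ({i | G.graph.Adj w (G.boundaryVertex i)} : Finset (Fin 4)) :=
    Finset.union_subset (fun i hi => (Finset.mem_filter_univ i).mpr (hadj i hi))
      (Finset.image_subset_iff.mpr fun i hi => (Finset.mem_filter_univ _).mpr (hadj_succ i hi))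
  exact (card_lt_card_union_image_add_one_of_ne_univ hnonempty hproper).trans_le
    (Finset.card_le_card hsubset)

theorem card_innerRing_add_four_le_sum_boundaryDegree
    (hne : ∀ w ∈ innerRingFinset G, G.boundaryDegree w ≠ 4) :
    #(innerRingFinset G) + 4 ≤ ∑ w ∈ innerRingFinset G, G.boundaryDegree w := by
  choose apex hapex hadj hadj_succ using G.exists_mem_innerRing_adj_boundaryVertex
  calc #(innerRingFinset G) + 4
      = ∑ w ∈ innerRingFinset G, (#{i | apex i = w} + 1) := by
        rw [Finset.sum_add_distrib, ← Finset.card_eq_sum_ones,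
          ← Finset.card_eq_sum_card_fiberwise fun i _ => hapex i, Finset.card_fin, add_comm]
    _ ≤ ∑ w ∈ innerRingFinset G, G.boundaryDegree w :=
        Finset.sum_le_sum fun w hw => card_lt_boundaryDegree_of_adj_succ hw (hne w hw)
          (fun i hi => (Finset.mem_filter_univ i).mp hi ▸ hadj i)
          (fun i hi => (Finset.mem_filter_univ i).mp hi ▸ hadj_succ i)

theorem exists_neighborFinset_eq_insert_boundaryFinset {r : V}
    (hboundary : G.boundaryDegree r = 4) (hdegree : G.graph.degree r = 5) :
    ∃ q ∉ boundaryFinset G, G.graph.neighborFinset r = insert q (boundaryFinset G) := by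
  have hsubset : boundaryFinset G ⊆ G.graph.neighborFinset r := fun b hb => by
    rw [← G.card_boundaryFinset] at hboundary
    exact (G.graph.mem_neighborFinset r b).mpr (Finset.card_filter_eq_iff.mp hboundary b hb)
  obtain ⟨q, hq, hinsert⟩ := (Finset.covBy_iff_card_sdiff_eq_one.mpr ⟨hsubset, by
    rw [Finset.card_sdiff_of_subset hsubset, card_neighborFinset_eq_degree, hdegree,
      card_boundaryFinset]⟩).exists_finset_insert
  exact ⟨q, hq, hinsert.symm⟩

theorem exists_mem_innerRing_two_le_boundaryDegree {r : V} (hr : r ∈ interiorFinset G)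
    (hboundary : G.boundaryDegree r = 4) (hdegree : G.graph.degree r = 5) :
    ∃ q ∈ innerRingFinset G, r ≠ q ∧ 2 ≤ G.boundaryDegree q := by
  obtain ⟨q, hq, hneighbors⟩ := exists_neighborFinset_eq_insert_boundaryFinset hboundary hdegree
  have hrq : G.graph.Adj r q := by
    rw [← mem_neighborFinset, hneighbors]
    exact Finset.mem_insert_self q _
  have hcommon : G.graph.neighborFinset r ∩ G.graph.neighborFinset q ⊆
      {b ∈ boundaryFinset G | G.graph.Adj q b} := fun t ht => by
    rw [hneighbors, Finset.mem_inter, Finset.mem_insert, mem_neighborFinset] at ht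
    exact Finset.mem_filter.mpr ⟨ht.1.resolve_left ht.2.ne', ht.2⟩
  have htwo : 2 ≤ G.boundaryDegree q :=
    (two_le_card_neighborFinset_inter hrq hr).trans (Finset.card_le_card hcommon)
  have hinterior : q ∈ interiorFinset G := Finset.mem_sdiff.mpr ⟨Finset.mem_univ q, hq⟩
  exact ⟨q, mem_innerRingFinset_iff.mpr ⟨hinterior, by omega⟩, hrq.ne, htwo⟩

theorem six_mul_card_innerRing_add_four_le_sum_of_boundaryDegree_eq_four
    (hdeg : ∀ w ∈ interiorFinset G, 5 ≤ G.graph.degree w) {r : V} (hr : r ∈ innerRingFinset G)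
    (hboundary : G.boundaryDegree r = 4) :
    6 * #(innerRingFinset G) + 4 ≤
      ∑ w ∈ innerRingFinset G, (G.graph.degree w + G.boundaryDegree w) := by
  have hsix : ∀ w ∈ innerRingFinset G, 6 ≤ G.graph.degree w + G.boundaryDegree w := fun w hw =>
    have ⟨hinterior, hpos⟩ := mem_innerRingFinset_iff.mp hw
    add_le_add (hdeg w hinterior) hpos
  have hexcess {t : Finset V} (ht : t ⊆ innerRingFinset G) :=
    card_nsmul_add_sum_le_sum_add_card_nsmul ht fun w hw => hsix w (Finset.mem_sdiff.mp hw).1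
  have hrInterior := innerRingFinset_subset_interiorFinset hr
  obtain hdegree | hdegree := (hdeg r hrInterior).eq_or_lt
  · obtain ⟨q, hq, hrq, htwo⟩ :=
      exists_mem_innerRing_two_le_boundaryDegree hrInterior hboundary hdegree.symm
    have hpair := hexcess (Finset.insert_subset hr (Finset.singleton_subset_iff.mpr hq))
    rw [Finset.sum_pair hrq, Finset.card_pair hrq, smul_eq_mul, smul_eq_mul] at hpair
    have := hdeg q (innerRingFinset_subset_interiorFinset hq)
    omega
  · have hsingleton := hexcess (Finset.singleton_subset_iff.mpr hr)
    rw [Finset.sum_singleton, Finset.card_singleton, smul_eq_mul, smul_eq_mul] at hsingleton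
    omega

theorem six_mul_card_innerRing_add_four_le_sum
    (hdeg : ∀ w ∈ interiorFinset G, 5 ≤ G.graph.degree w) :
    6 * #(innerRingFinset G) + 4 ≤
      ∑ w ∈ innerRingFinset G, (G.graph.degree w + G.boundaryDegree w) := by
  by_cases hhub : ∃ r ∈ innerRingFinset G, G.boundaryDegree r = 4
  · obtain ⟨r, hr, hboundary⟩ := hhub
    exact six_mul_card_innerRing_add_four_le_sum_of_boundaryDegree_eq_four hdeg hr hboundary
  · have hboundarySum := card_innerRing_add_four_le_sum_boundaryDegree fun r hr hboundary =>
      hhub ⟨r, hr, hboundary⟩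
    have hdegreeSum := Finset.card_nsmul_le_sum (innerRingFinset G) _ 5 fun w hw =>
      hdeg w (innerRingFinset_subset_interiorFinset hw)
    rw [smul_eq_mul] at hdegreeSum
    rw [Finset.sum_add_distrib]
    omega

end AGraph

theorem Internally6aConnected.five_le_vdeg {V : Type} [Fintype V] [DecidableEq V] {G : AGraph V}
    (hG : Internally6aConnected G) {w : V} (hw : w ∈ interiorFinset G) : 5 ≤ vdeg G.graph w := by
  obtain ⟨T, hT, hmin, -⟩ := hG
  obtain ⟨hu, hx, hv, hy⟩ : w ≠ G.u ∧ w ≠ G.x ∧ w ≠ G.v ∧ w ≠ G.y := by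
    simpa [interiorFinset, boundaryFinset] using hw
  refine (hmin w).trans_eq ?_
  obtain hT | hT := hT
  · rw [hT, parentXYGraph, vdeg_sup_fromEdgeSet_singleton G.graph hx hy]
  · rw [hT, parentUVGraph, vdeg_sup_fromEdgeSet_singleton G.graph hu hv]

theorem stmt_10_general {V : Type} [Fintype V] [DecidableEq V] (G : AGraph V)
    (hdeg : ∀ w ∈ interiorFinset G, 5 ≤ vdeg G.graph w) :
    2 ≤ #(interiorFinset G \ innerRingFinset G) := by
  classical
  simp only [vdeg_eq_degree] at hdeg
  have hlower := AGraph.six_mul_card_innerRing_add_four_le_sum hdeg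
  have hupper := AGraph.sum_innerRing_degree_add_boundaryDegree_le hdeg
  omega

/-- If `G` belongs to `G(0,n)` or `G(1,n)`, then `G` is not internally
6a-connected: neither parent triangulation is internally 6-connected. -/
theorem stmt_10 {V : Type} [Fintype V] [DecidableEq V] (G : AGraph V) (n : ℕ)
    (h : InFamilyG G 0 n ∨ InFamilyG G 1 n) :
    ¬ Internally6aConnected G := by
  intro hG
  have henclosed := stmt_10_general G fun w => hG.five_le_vdeg
  obtain ⟨-, hm⟩ | ⟨-, hm⟩ := h <;> omega
end
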